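/- For every positive integer n there exist infinitely many words over an alphabet with 2(n+2) letters each of which simultaneously avoids every non-blocking pattern having at most n distinct letters. In other words, the set of all avoidable patterns in n or fewer letters can be avoided on an alphabet with 2(n+2) letters. -/

import Mathlib

/-- A word `w` *encounters* the pattern `u` if some letterwise substitution `h`
(sending each letter of `u` to a nonempty word) maps `u` onto a factor
(contiguous subword) of `w`. -/
def Encounters {Y B : Type*} (u : List Y) (w : List B) : Prop :=
  ∃ h : Y → List B, (∀ y ∈ u, h y ≠ []) ∧ u.flatMap h <:+: w

/-- A word `w` *avoids* the pattern `u` if it does not encounter it. -/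
def Avoids {Y B : Type*} (u : List Y) (w : List B) : Prop := ¬ Encounters u w

/-- A pattern `u` is `n`-avoidable if infinitely many words over an
`n`-letter alphabet avoid `u`. -/
def NAvoidable {Y : Type*} (u : List Y) (n : ℕ) : Prop :=
  {w : List (Fin n) | Avoids u w}.Infinite

/-- A pattern `u` is *blocking* (unavoidable) if over every finite alphabet
only finitely many words avoid `u`. -/
def Blocking {Y : Type*} (u : List Y) : Prop :=
  ∀ n : ℕ, {w : List (Fin n) | Avoids u w}.Finite


/-- The Zimin words, in the form of the interleaving recursion. -/
def zimin : ℕ → List ℕ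
  | 0 => []
  | N + 1 => (zimin N).flatMap (fun z => [0, z + 1]) ++ [0]

theorem zimin_succ (N : ℕ) : zimin (N + 1) = zimin N ++ [N] ++ zimin N := by
  induction N with
  | zero => simp [zimin]
  | succ N ih =>
    calc zimin (N + 2) = (zimin N ++ [N] ++ zimin N).flatMap (fun z => [0, z + 1]) ++ [0] := by
          rw [← ih]; rfl
      _ = zimin (N + 1) ++ [N + 1] ++ zimin (N + 1) := by simp [zimin]

theorem lt_of_mem_zimin {N z : ℕ} (hz : z ∈ zimin N) : z < N := by
  induction N with
  | zero => simp [zimin] at hz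
  | succ N ih =>
    rw [zimin_succ] at hz
    simp only [List.mem_append, List.mem_singleton] at hz
    rcases hz with (hz | hz) | hz
    · exact (ih hz).trans (Nat.lt_succ_self N)
    · omega
    · exact (ih hz).trans (Nat.lt_succ_self N)

theorem Encounters.trans {X Y B : Type*} {p : List X} {z : List Y} {w : List B}
    (hpz : Encounters p z) (hzw : Encounters z w) : Encounters p w := by
  obtain ⟨h, hne, a, b, hab⟩ := hpz
  obtain ⟨g, gne, hg⟩ := hzw
  refine ⟨fun x => (h x).flatMap g, ?_, ?_⟩
  · intro x hx hnil
    obtain ⟨y, hy⟩ := List.exists_mem_of_ne_nil _ (hne x hx)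
    refine gne y ?_ (List.flatMap_eq_nil_iff.1 hnil y hy)
    rw [← hab]
    simp only [List.mem_append, List.mem_flatMap]
    exact Or.inl (Or.inr ⟨x, hx, hy⟩)
  · rw [← List.flatMap_assoc]
    refine List.IsInfix.trans ⟨a.flatMap g, b.flatMap g, ?_⟩ hg
    rw [← hab]
    simp

/-- A long enough word contains two disjoint, non-adjacent equal factors of length `L`. -/
theorem exists_repeated_factor (k L : ℕ) (w : List (Fin k))
    (hw : (L + 1) * (k ^ L + 1) ≤ w.length) :
    ∃ a f c b : List (Fin k), f.length = L ∧ c ≠ [] ∧ w = a ++ f ++ c ++ f ++ b := by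
  have key : ∃ i j : ℕ, i < j ∧ j < k ^ L + 1 ∧
      (w.drop (i * (L + 1))).take L = (w.drop (j * (L + 1))).take L := by
    have hlen : ∀ i : Fin (k ^ L + 1), ((w.drop (i * (L + 1))).take L).length = L := by
      intro i
      have hi : (i : ℕ) + 1 ≤ k ^ L + 1 := i.2
      have := Nat.mul_le_mul_left (L + 1) hi
      have h2 : (L + 1) * ((i : ℕ) + 1) = i * (L + 1) + (L + 1) := by ring
      simp only [List.length_take, List.length_drop]
      omega
    obtain ⟨i, j, hij, he⟩ := Fintype.exists_ne_map_eq_of_card_lt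
      (β := List.Vector (Fin k) L) (fun i : Fin (k ^ L + 1) => ⟨_, hlen i⟩) (by simp)
    have he' := congrArg Subtype.val he
    rcases lt_or_gt_of_ne hij with h | h
    · exact ⟨i, j, h, j.2, he'⟩
    · exact ⟨j, i, h, i.2, he'.symm⟩
  obtain ⟨i, j, hij, hj, he⟩ := key
  have h1 : (i + 1) * (L + 1) ≤ j * (L + 1) := Nat.mul_le_mul_right _ hij
  have h2 : (j + 1) * (L + 1) ≤ (k ^ L + 1) * (L + 1) := Nat.mul_le_mul_right _ hj
  rw [add_mul, one_mul] at h1 h2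
  rw [mul_comm] at hw
  set I := i * (L + 1)
  set J := j * (L + 1)
  refine ⟨w.take I, (w.drop I).take L, (w.drop (I + L)).take (J - (I + L)), w.drop (J + L),
    ?_, ?_, ?_⟩
  · simp only [List.length_take, List.length_drop]; omega
  · apply List.ne_nil_of_length_pos
    simp only [List.length_take, List.length_drop]; omega
  · have e1 : (w.drop I).take L ++ w.drop (J + L) = w.drop J := by
      rw [he, ← List.drop_drop, List.take_append_drop]
    have e2 : (w.drop (I + L)).take (J - (I + L)) ++ w.drop J = w.drop (I + L) := by
      conv_rhs => rw [← List.take_append_drop (J - (I + L)) (w.drop (I + L)), List.drop_drop]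
      congr 2
      omega
    rw [List.append_assoc, e1, List.append_assoc, e2, List.append_assoc, ← List.drop_drop,
      List.take_append_drop, List.take_append_drop]

theorem exists_length_encounters_zimin (k N : ℕ) :
    ∃ L : ℕ, ∀ w : List (Fin k), L ≤ w.length → Encounters (zimin N) w := by
  induction N with
  | zero => exact ⟨0, fun w _ => ⟨fun _ => [], by simp [zimin], by simp [zimin]⟩⟩
  | succ N ih =>
    obtain ⟨L, hL⟩ := ih
    refine ⟨(L + 1) * (k ^ L + 1), fun w hw => ?_⟩
    obtain ⟨a, f, c, b, hf, hc, rfl⟩ := exists_repeated_factor k L w hw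
    obtain ⟨h, hne, a', b', hab⟩ := hL f hf.ge
    set g : ℕ → List (Fin k) := fun z => if z = N then b' ++ c ++ a' else h z with hg
    have hgz : (zimin N).flatMap g = (zimin N).flatMap h := by
      apply List.flatMap_congr
      intro z hz
      simp [hg, (lt_of_mem_zimin hz).ne]
    refine ⟨g, ?_, ?_⟩
    · intro z hz
      by_cases hzN : z = N
      · simp [hg, hzN, hc]
      · rw [zimin_succ] at hz
        simp only [List.mem_append, List.mem_singleton, hzN, or_false, or_self] at hz
        simpa [hg, hzN] using hne z hz
    · rw [zimin_succ]
      refine ⟨a ++ a', b' ++ b, ?_⟩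
      simp only [List.flatMap_append, hgz]
      rw [← hab]
      simp [hg]

theorem blocking_of_encounters_zimin {p : List ℕ} {N : ℕ} (hp : Encounters p (zimin N)) :
    Blocking p := by
  intro k
  obtain ⟨L, hL⟩ := exists_length_encounters_zimin k N
  refine (List.finite_length_lt (Fin k) L).subset fun w hw => ?_
  by_contra hlen
  exact hw (hp.trans (hL w (not_lt.1 hlen)))

/-- `IsWalk ρ l p g`: the word `p` is a walk starting at `g`, where a letter `x` is read as an
arrow from `ρ x` to `l x`. -/
def IsWalk {γ : Type*} (ρ l : ℕ → γ) : List ℕ → γ → Prop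
  | [], _ => True
  | x :: p, g => ρ x = g ∧ IsWalk ρ l p (l x)

theorem IsWalk.map {γ δ : Type*} {ρ l : ℕ → γ} (f : γ → δ) {p : List ℕ} {g : γ}
    (hp : IsWalk ρ l p g) : IsWalk (f ∘ ρ) (f ∘ l) p (f g) := by
  induction p generalizing g with
  | nil => trivial
  | cons x p ih => exact ⟨congrArg f hp.1, ih hp.2⟩

theorem IsWalk.filter {γ : Type*} {ρ l : ℕ → γ} {K : ℕ → Bool} {p : List ℕ} {g : γ}
    (hp : IsWalk ρ l p g) (hK : ∀ x ∈ p, K x = false → ρ x = l x) :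
    IsWalk ρ l (p.filter K) g := by
  induction p generalizing g with
  | nil => trivial
  | cons x p ih =>
    have ih_tail := ih hp.2 fun y hy => hK y (List.mem_cons_of_mem _ hy)
    cases hx : K x with
    | true => simpa [List.filter_cons, hx] using ⟨hp.1, ih_tail⟩
    | false =>
      rw [← hK x List.mem_cons_self hx, hp.1] at ih_tail
      simpa [List.filter_cons, hx] using ih_tail

/-- `ZiminEncounters p`: some Zimin word encounters `p`. -/
def ZiminEncounters (p : List ℕ) : Prop := ∃ N, Encounters p (zimin N)

/-- Deleting a free set of letters reflects being encountered by a Zimin word. -/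
theorem ZiminEncounters.of_filter_free {ρ l : ℕ → Bool} {K : ℕ → Bool} {p : List ℕ} {g : Bool}
    (hp : IsWalk ρ l p g) (hK : ∀ x ∈ p, K x = false → ρ x = false ∧ l x = true)
    (hZ : ZiminEncounters (p.filter K)) : ZiminEncounters p := by
  obtain ⟨N, h, hne, a, b, hab⟩ := hZ
  set blk : ℕ → List ℕ := fun z => [0, z + 1] with hblk
  set H : ℕ → List ℕ := fun x => (h x).flatMap blk with hH
  set G : ℕ → List ℕ := fun x => if K x = false then [0] else
    (if ρ x = true then (H x).tail else H x) ++ (if l x = true then [0] else []) with hG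
  have hHne : ∀ x ∈ p, K x = true → ∃ z t, H x = 0 :: (z + 1) :: t := by
    intro x hx hKx
    obtain ⟨z, t, hzt⟩ := List.exists_cons_of_ne_nil
      (hne x (List.mem_filter.2 ⟨hx, hKx⟩))
    exact ⟨z, t.flatMap blk, by simp [hH, hzt, hblk]⟩
  have main : ∀ (p : List ℕ) (g : Bool), IsWalk ρ l p g →
      (∀ x ∈ p, K x = false → ρ x = false ∧ l x = true) →
      (∀ x ∈ p, K x = true → ∃ z t, H x = 0 :: (z + 1) :: t) →
      ∃ g' : Bool, (if g = true then [0] else []) ++ p.flatMap G =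
        (p.filter K).flatMap H ++ (if g' = true then [0] else []) := by
    intro p
    induction p with
    | nil => intro g _ _ _; exact ⟨g, by simp⟩
    | cons x p ih =>
      intro g hw hk hh
      obtain ⟨g', hg'⟩ := ih (l x) hw.2 (fun y hy => hk y (List.mem_cons_of_mem _ hy))
        (fun y hy => hh y (List.mem_cons_of_mem _ hy))
      refine ⟨g', ?_⟩
      have hρ : ρ x = g := hw.1
      cases hx : K x with
      | false =>
        obtain ⟨h1, h2⟩ := hk x List.mem_cons_self hx
        rw [h1] at hρ
        subst hρ
        rw [h2] at hg'
        simpa [hx, hG] using hg'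
      | true =>
        obtain ⟨z, t, hzt⟩ := hh x List.mem_cons_self hx
        have e : (if g = true then [0] else []) ++ G x =
            H x ++ (if l x = true then [0] else []) := by
          cases g <;> simp [hG, hx, hρ, hzt]
        rw [List.flatMap_cons, ← List.append_assoc, e, List.append_assoc, hg']
        simp [hx]
  obtain ⟨g', hg'⟩ := main p g hp hK hHne
  refine ⟨N + 1, G, ?_, ?_⟩
  · intro x hx
    cases hKx : K x with
    | false => simp [hG, hKx]
    | true =>
      obtain ⟨z, t, hzt⟩ := hHne x hx hKx
      cases hρ : ρ x <;> simp [hG, hKx, hzt, hρ]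
  · have h1 : p.flatMap G <:+: (p.filter K).flatMap H ++ (if g' = true then [0] else []) :=
      hg' ▸ (List.suffix_append _ _).isInfix
    refine h1.trans ?_
    have h2 : (p.filter K).flatMap H = ((p.filter K).flatMap h).flatMap blk := by
      rw [List.flatMap_assoc]
    have h3 : zimin (N + 1) = a.flatMap blk ++ (p.filter K).flatMap H ++ (b.flatMap blk ++ [0]) := by
      rw [show zimin (N + 1) = (zimin N).flatMap blk ++ [0] from rfl, ← hab, h2]
      simp
    rw [h3, List.append_assoc]
    refine List.IsInfix.trans ?_ (List.suffix_append _ _).isInfix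
    refine List.IsPrefix.isInfix ((List.prefix_append_right_inj _).2 ?_)
    cases g' <;> cases b <;> simp [hblk]

/-- Deleting a set of letters along which some potential strictly increases reflects being
encountered by a Zimin word. -/
theorem ZiminEncounters.of_filter_potential (M : ℕ) {ρ l : ℕ → ℕ} {K : ℕ → Bool} {p : List ℕ}
    {g : ℕ} (hp : IsWalk ρ l p g) (hK : ∀ x ∈ p, K x = false → ρ x < l x ∧ l x ≤ M)
    (hZ : ZiminEncounters (p.filter K)) : ZiminEncounters p := by
  induction M generalizing ρ l p g with
  | zero =>
    rwa [List.filter_eq_self.2] at hZ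
    intro x hx
    cases hKx : K x with
    | true => rfl
    | false => have := hK x hx hKx; omega
  | succ M ih =>
    set K₀ : ℕ → Bool := fun x => K x || !(decide (ρ x = 0) && decide (l x = 1)) with hK₀
    have hK₀f : ∀ x, K₀ x = false → K x = false ∧ ρ x = 0 ∧ l x = 1 := by
      intro x hx
      simpa [hK₀] using hx
    apply ZiminEncounters.of_filter_free (K := K₀) (hp.map (fun c => decide (c ≠ 0)))
    · intro x _ hx
      obtain ⟨_, h1, h2⟩ := hK₀f x hx
      simp [h1, h2]
    · refine ih ((hp.map (fun c => c - 1)).filter ?_) ?_ ?_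
      · intro x _ hx
        obtain ⟨_, h1, h2⟩ := hK₀f x hx
        simp [h1, h2]
      · intro x hx hKx
        obtain ⟨hxp, hx0⟩ := List.mem_filter.1 hx
        have := hK x hxp hKx
        have h0 : ¬ρ x = 0 ∨ ¬l x = 1 := by simpa [hK₀, hKx] using hx0
        simp only [Function.comp]
        omega
      · rw [List.filter_filter]
        convert hZ using 2
        funext x
        cases hKx : K x <;> simp [hK₀, hKx]

/-- The finite word `w` occurs in the infinite word `ω` at position `s`. -/
def OccursAt (ω : ℕ → ℕ) (w : List ℕ) (s : ℕ) : Prop :=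
  w = (List.range' s w.length).map ω

theorem OccursAt.getElem {ω : ℕ → ℕ} {w : List ℕ} {s i : ℕ} (hw : OccursAt ω w s)
    (hi : i < w.length) : w[i] = ω (s + i) := by
  have h := List.getElem_of_eq hw hi
  simpa using h

theorem OccursAt.append {ω : ℕ → ℕ} {v w : List ℕ} {s : ℕ} (h : OccursAt ω (v ++ w) s) :
    OccursAt ω v s ∧ OccursAt ω w (s + v.length) := by
  have hr := @List.range'_append s v.length w.length 1
  rw [one_mul] at hr
  unfold OccursAt at h
  rw [List.length_append, ← hr, List.map_append] at h
  exact List.append_inj h (by simp)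

/-- The images of the letters of `p` under `h` occur in `ω` one after the other from `s` on. -/
def IsTiling (ω : ℕ → ℕ) (h : ℕ → List ℕ) : List ℕ → ℕ → Prop
  | [], _ => True
  | x :: p, s => OccursAt ω (h x) s ∧ IsTiling ω h p (s + (h x).length)

theorem OccursAt.isTiling {ω : ℕ → ℕ} {h : ℕ → List ℕ} {p : List ℕ} {s : ℕ}
    (hp : OccursAt ω (p.flatMap h) s) : IsTiling ω h p s := by
  induction p generalizing s with
  | nil => trivial
  | cons x p ih =>
    rw [List.flatMap_cons] at hp
    exact ⟨hp.append.1, ih hp.append.2⟩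

theorem IsTiling.exists_occursAt {ω : ℕ → ℕ} {h : ℕ → List ℕ} {p : List ℕ} {s x : ℕ}
    (hp : IsTiling ω h p s) (hx : x ∈ p) : ∃ t, OccursAt ω (h x) t := by
  induction p generalizing s with
  | nil => simp at hx
  | cons y p ih =>
    rcases List.mem_cons.1 hx with rfl | hx
    · exact ⟨s, hp.1⟩
    · exact ih hp.2 hx

/-- Deletion of letters in a tiled occurrence, controlled by a potential `κ` on the gaps: `κ` is
constant along the letters already removed (those with `K x = false`), well defined at both ends of
the other ones, and increases along the letters to be removed (those with `K' x = false`). -/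
theorem IsTiling.ziminEncounters_filter {ω : ℕ → ℕ} {h : ℕ → List ℕ} {p : List ℕ} {s : ℕ}
    (hp : IsTiling ω h p s) (κ : ℕ → ℕ) (M : ℕ) (hM : ∀ t, κ t ≤ M) (K K' : ℕ → Bool)
    (hdrop : ∀ x ∈ p, K x = false → ∀ t, OccursAt ω (h x) t → κ t = κ (t + (h x).length))
    (hkeep : ∀ x ∈ p, K x = true → ∀ t t', OccursAt ω (h x) t → OccursAt ω (h x) t' →
      κ t = κ t' ∧ κ (t + (h x).length) = κ (t' + (h x).length))
    (hinc : ∀ x ∈ p, K x = true → K' x = false → ∀ t, OccursAt ω (h x) t →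
      κ t < κ (t + (h x).length))
    (hZ : ZiminEncounters ((p.filter K).filter K')) : ZiminEncounters (p.filter K) := by
  set pos : ℕ → ℕ := fun x => Classical.epsilon (OccursAt ω (h x)) with hpos
  have hocc : ∀ x ∈ p, OccursAt ω (h x) (pos x) := fun x hx =>
    Classical.epsilon_spec (hp.exists_occursAt hx)
  have walk : ∀ (r : List ℕ) (t : ℕ), (∀ x ∈ r, x ∈ p) → IsTiling ω h r t →
      IsWalk (fun x => κ (pos x)) (fun x => κ (pos x + (h x).length)) (r.filter K) (κ t) := by
    intro r
    induction r with
    | nil => intro _ _ _; trivial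
    | cons x r ih =>
      intro t hr ht
      have hx : x ∈ p := hr x List.mem_cons_self
      have ih' := ih _ (fun y hy => hr y (List.mem_cons_of_mem _ hy)) ht.2
      cases hKx : K x with
      | false =>
        rw [← hdrop x hx hKx t ht.1] at ih'
        simpa [hKx] using ih'
      | true =>
        obtain ⟨h1, h2⟩ := hkeep x hx hKx _ _ (hocc x hx) ht.1
        rw [← h2] at ih'
        rw [List.filter_cons_of_pos hKx]
        exact ⟨h1, ih'⟩
  refine ZiminEncounters.of_filter_potential M (walk p s (fun _ hx => hx) hp) ?_ hZ
  intro x hx hK'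
  obtain ⟨hxp, hKx⟩ := List.mem_filter.1 hx
  exact ⟨hinc x hxp hKx hK' _ (hocc x hxp), hM _⟩

/-- Index of the block containing position `j`. Blocks have alternately `(n + 2) / 2` and
`n + 2 - (n + 2) / 2` pairs of positions. -/
def blockIndex (n j : ℕ) : ℕ :=
  2 * (j / 2 / (n + 2)) + if j / 2 % (n + 2) < (n + 2) / 2 then 0 else 1

/-- First position of block number `b`. -/
def blockStart (n b : ℕ) : ℕ :=
  2 * ((n + 2) * (b / 2) + b % 2 * ((n + 2) / 2))

theorem blockIndex_lt {n j : ℕ} (hj : 2 ≤ j) : blockIndex n j < j := by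
  unfold blockIndex
  rcases lt_or_ge (j / 2) (n + 2) with h | h
  · rw [Nat.div_eq_of_lt h]
    split_ifs <;> omega
  · have h1 : j / 2 / (n + 2) ≤ j / 2 / 2 := Nat.div_le_div_left (by omega) (by norm_num)
    split_ifs <;> omega

/-- Index, within its class, of the letter of the avoiding word at position `j`. -/
def letterIndex (n j : ℕ) : ℕ :=
  if j % 2 = 1 then j / 2 % (n + 2)
  else if h : 2 ≤ j then (j / 2 + letterIndex n (blockIndex n j)) % (n + 2)
  else 0
termination_by j
decreasing_by exact blockIndex_lt h

/-- The avoiding infinite word: the letters at odd positions run cyclically through one half of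
the alphabet, the letters at even positions are shifted, blockwise, by the word itself. -/
def avoidingWord (n j : ℕ) : ℕ := 2 * letterIndex n j + j % 2

theorem letterIndex_lt (n j : ℕ) : letterIndex n j < n + 2 := by
  rw [letterIndex]
  split_ifs
  · exact Nat.mod_lt _ (by omega)
  · exact Nat.mod_lt _ (by omega)
  · omega

theorem letterIndex_odd (n t : ℕ) : letterIndex n (2 * t + 1) = t % (n + 2) := by
  rw [letterIndex, if_pos (by omega), show (2 * t + 1) / 2 = t by omega]

theorem letterIndex_even (n t : ℕ) :
    letterIndex n (2 * t) = (t + letterIndex n (blockIndex n (2 * t))) % (n + 2) := by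
  rcases Nat.eq_zero_or_pos t with rfl | ht
  · have h0 : letterIndex n 0 = 0 := by rw [letterIndex]; simp
    have hb : blockIndex n 0 = 0 := by simp [blockIndex]
    simp [h0, hb]
  · rw [letterIndex, if_neg (by omega), dif_pos (by omega), show 2 * t / 2 = t by omega]

theorem avoidingWord_lt (n j : ℕ) : avoidingWord n j < 2 * (n + 2) := by
  have := letterIndex_lt n j
  unfold avoidingWord
  omega

theorem avoidingWord_mod_two (n j : ℕ) : avoidingWord n j % 2 = j % 2 := by
  unfold avoidingWord; omega

theorem avoidingWord_inj {n j j' : ℕ} (h : avoidingWord n j = avoidingWord n j') :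
    j % 2 = j' % 2 ∧ letterIndex n j = letterIndex n j' := by
  unfold avoidingWord at h; omega

theorem modEq_two_mul_iff {q j j' : ℕ} :
    j ≡ j' [MOD 2 * q] ↔ j % 2 = j' % 2 ∧ j / 2 % q = j' / 2 % q := by
  unfold Nat.ModEq
  rw [Nat.mod_mul, Nat.mod_mul]
  omega

theorem avoidingWord_eq_last_iff {n j : ℕ} :
    avoidingWord n j = 2 * n + 3 ↔ j % 2 = 1 ∧ j / 2 % (n + 2) = n + 1 := by
  constructor
  · intro h
    have hj : j % 2 = 1 := by have := avoidingWord_mod_two n j; omega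
    obtain ⟨t, rfl⟩ : ∃ t, j = 2 * t + 1 := ⟨j / 2, by omega⟩
    rw [avoidingWord, letterIndex_odd] at h
    refine ⟨hj, ?_⟩
    rw [show (2 * t + 1) / 2 = t by omega]
    omega
  · rintro ⟨hj, h⟩
    obtain ⟨t, rfl⟩ : ∃ t, j = 2 * t + 1 := ⟨j / 2, by omega⟩
    rw [show (2 * t + 1) / 2 = t by omega] at h
    rw [avoidingWord, letterIndex_odd, h]
    omega

theorem modEq_of_avoidingWord_eq_of_odd {n j j' : ℕ} (h : avoidingWord n j = avoidingWord n j')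
    (hj : j % 2 = 1) : j ≡ j' [MOD 2 * (n + 2)] := by
  obtain ⟨h2, hi⟩ := avoidingWord_inj h
  refine modEq_two_mul_iff.2 ⟨h2, ?_⟩
  obtain ⟨t, rfl⟩ : ∃ t, j = 2 * t + 1 := ⟨j / 2, by omega⟩
  obtain ⟨t', rfl⟩ : ∃ t, j' = 2 * t + 1 := ⟨j' / 2, by omega⟩
  rw [letterIndex_odd, letterIndex_odd] at hi
  rwa [show (2 * t + 1) / 2 = t by omega, show (2 * t' + 1) / 2 = t' by omega]

theorem blockIndex_mod_two {n j : ℕ} :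
    blockIndex n j % 2 = if j / 2 % (n + 2) < (n + 2) / 2 then 0 else 1 := by
  unfold blockIndex
  split_ifs <;> omega

theorem blockIndex_mod_two_of_modEq {n j j' : ℕ} (h : j ≡ j' [MOD 2 * (n + 2)]) :
    blockIndex n j % 2 = blockIndex n j' % 2 := by
  rw [blockIndex_mod_two, blockIndex_mod_two, (modEq_two_mul_iff.1 h).2]

theorem blockIndex_two_mul_add_one (n t : ℕ) :
    blockIndex n (2 * t + 1) = blockIndex n (2 * t) := by
  unfold blockIndex
  rw [show (2 * t + 1) / 2 = 2 * t / 2 by omega]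

/-- Two consecutive letters determine the residue of their position and the letter that generates
the block containing the second one. -/
theorem synchronization {n j j' : ℕ} (h : avoidingWord n j = avoidingWord n j')
    (h' : avoidingWord n (j + 1) = avoidingWord n (j' + 1)) :
    j ≡ j' [MOD 2 * (n + 2)] ∧
      avoidingWord n (blockIndex n (j + 1)) = avoidingWord n (blockIndex n (j' + 1)) := by
  obtain ⟨h2, hi⟩ := avoidingWord_inj h
  have hmod : j ≡ j' [MOD 2 * (n + 2)] := by
    rcases Nat.mod_two_eq_zero_or_one j with hj | hj
    · exact Nat.ModEq.add_right_cancel' 1 (modEq_of_avoidingWord_eq_of_odd h' (by omega))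
    · exact modEq_of_avoidingWord_eq_of_odd h hj
  refine ⟨hmod, ?_⟩
  have key : ∀ t t' : ℕ, 2 * t ≡ 2 * t' [MOD 2 * (n + 2)] →
      letterIndex n (2 * t) = letterIndex n (2 * t') →
      avoidingWord n (blockIndex n (2 * t)) = avoidingWord n (blockIndex n (2 * t')) := by
    intro t t' ht hl
    have hp := blockIndex_mod_two_of_modEq ht
    rw [letterIndex_even, letterIndex_even] at hl
    have ht' : t ≡ t' [MOD n + 2] := by
      have := (modEq_two_mul_iff.1 ht).2
      rwa [show 2 * t / 2 = t by omega, show 2 * t' / 2 = t' by omega] at this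
    have := Nat.ModEq.add_left_cancel ht' hl
    have := this.eq_of_lt_of_lt (letterIndex_lt _ _) (letterIndex_lt _ _)
    unfold avoidingWord
    rw [this, hp]
  rcases Nat.mod_two_eq_zero_or_one j with hj | hj
  · obtain ⟨t, rfl⟩ : ∃ t, j = 2 * t := ⟨j / 2, by omega⟩
    obtain ⟨t', rfl⟩ : ∃ t, j' = 2 * t := ⟨j' / 2, by omega⟩
    rw [blockIndex_two_mul_add_one, blockIndex_two_mul_add_one]
    exact key t t' hmod hi
  · obtain ⟨t, ht⟩ : ∃ t, j + 1 = 2 * t := ⟨(j + 1) / 2, by omega⟩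
    obtain ⟨t', ht'⟩ : ∃ t, j' + 1 = 2 * t := ⟨(j' + 1) / 2, by omega⟩
    have hmod' := hmod.add_right 1
    have hi' := (avoidingWord_inj h').2
    rw [ht, ht'] at hmod' hi' ⊢
    exact key t t' hmod' hi'

theorem blockStart_blockIndex (n j : ℕ) :
    blockStart n (blockIndex n j) = 2 * ((n + 2) * (j / 2 / (n + 2)) +
      if j / 2 % (n + 2) < (n + 2) / 2 then 0 else (n + 2) / 2) := by
  unfold blockStart
  rw [blockIndex_mod_two]
  congr 2
  · congr 1
    unfold blockIndex
    split_ifs <;> omega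
  · split_ifs <;> simp

theorem blockStart_blockIndex_le (n j : ℕ) : blockStart n (blockIndex n j) ≤ j := by
  rw [blockStart_blockIndex]
  have := Nat.div_add_mod (j / 2) (n + 2)
  split_ifs <;> omega

theorem blockIndex_blockStart_add {n b o : ℕ} (ho : o < 2 * ((n + 2) / 2)) :
    blockIndex n (blockStart n b + o) = b := by
  unfold blockIndex blockStart
  have e : (2 * ((n + 2) * (b / 2) + b % 2 * ((n + 2) / 2)) + o) / 2 =
      (b % 2 * ((n + 2) / 2) + o / 2) + (n + 2) * (b / 2) := by omega
  have hlt : b % 2 * ((n + 2) / 2) + o / 2 < n + 2 := by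
    rcases Nat.mod_two_eq_zero_or_one b with hb | hb <;> rw [hb] <;> omega
  rw [e, Nat.add_mul_div_left _ _ (by omega), Nat.add_mul_mod_self_left, Nat.mod_eq_of_lt hlt,
    Nat.div_eq_of_lt hlt]
  rcases Nat.mod_two_eq_zero_or_one b with hb | hb <;> rw [hb] <;> split_ifs <;> omega

theorem blockIndex_succ (n j : ℕ) : blockIndex n (j + 1) = blockIndex n j ∨
    (blockIndex n (j + 1) = blockIndex n j + 1 ∧ blockStart n (blockIndex n (j + 1)) = j + 1) := by
  rw [blockStart_blockIndex]
  unfold blockIndex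
  rcases Nat.mod_two_eq_zero_or_one j with hj | hj
  · left
    rw [show (j + 1) / 2 = j / 2 by omega]
  · rw [show (j + 1) / 2 = j / 2 + 1 by omega]
    have h1 := Nat.div_add_mod (j / 2) (n + 2)
    have h2 := Nat.mod_lt (j / 2) (show 0 < n + 2 by omega)
    rcases Nat.lt_or_ge (j / 2 % (n + 2) + 1) (n + 2) with h | h
    · have e1 : (j / 2 + 1) / (n + 2) = j / 2 / (n + 2) := by
        rw [Nat.div_eq_iff (by omega)]
        constructor
        · rw [mul_comm]; omega
        · rw [mul_comm]; omega
      have e2 : (j / 2 + 1) % (n + 2) = j / 2 % (n + 2) + 1 := by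
        have h3 := Nat.div_add_mod (j / 2 + 1) (n + 2)
        rw [e1] at h3
        omega
      rw [e1, e2]
      split_ifs <;> omega
    · have e : j / 2 + 1 = (n + 2) * (j / 2 / (n + 2) + 1) := by rw [mul_add]; omega
      rw [e, Nat.mul_div_cancel_left _ (by omega), Nat.mul_mod_right]
      right
      split_ifs <;> omega

theorem blockIndex_mono (n : ℕ) : Monotone (blockIndex n) := by
  refine monotone_nat_of_le_succ fun j => ?_
  rcases blockIndex_succ n j with h | h <;> omega

theorem sub_blockStart_of_modEq {n j j' : ℕ} (h : j ≡ j' [MOD 2 * (n + 2)]) :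
    j - blockStart n (blockIndex n j) = j' - blockStart n (blockIndex n j') := by
  obtain ⟨h1, h2⟩ := modEq_two_mul_iff.1 h
  rw [blockStart_blockIndex, blockStart_blockIndex, h2]
  have := Nat.div_add_mod (j / 2) (n + 2)
  have := Nat.div_add_mod (j' / 2) (n + 2)
  split_ifs <;> omega

/-- `j` is the last position of a block with odd index. -/
def IsOddEnd (n j : ℕ) : Prop := j % 2 = 1 ∧ j / 2 % (n + 2) = n + 1

theorem IsOddEnd.blockIndex_succ_eq {n j : ℕ} (h : IsOddEnd n j) :
    blockIndex n (j + 1) = blockIndex n j + 1 := by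
  obtain ⟨h1, h2⟩ := h
  have h3 := Nat.div_add_mod (j / 2) (n + 2)
  have e : (j + 1) / 2 = (n + 2) * (j / 2 / (n + 2) + 1) := by rw [mul_add]; omega
  unfold blockIndex
  rw [e, Nat.mul_div_cancel_left _ (by omega), Nat.mul_mod_right]
  split_ifs <;> omega

theorem IsOddEnd.blockIndex_odd {n j : ℕ} (h : IsOddEnd n j) : blockIndex n j % 2 = 1 := by
  rw [blockIndex_mod_two, h.2, if_neg (by omega)]

theorem IsOddEnd.le {n j : ℕ} (h : IsOddEnd n j) :
    blockStart n (blockIndex n j) + 2 * ((n + 2) / 2) ≤ j + 1 := by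
  obtain ⟨h1, h2⟩ := h
  have h3 := Nat.div_add_mod (j / 2) (n + 2)
  rw [blockStart_blockIndex]
  split_ifs <;> omega

theorem exists_isOddEnd {n s : ℕ} (hs : blockIndex n s % 2 = 1) :
    ∃ j, s ≤ j ∧ IsOddEnd n j ∧ blockIndex n j = blockIndex n s := by
  have h3 := Nat.div_add_mod (s / 2) (n + 2)
  have h4 := Nat.mod_lt (s / 2) (show 0 < n + 2 by omega)
  have e : (2 * ((n + 1) + (n + 2) * (s / 2 / (n + 2))) + 1) / 2 =
      (n + 1) + (n + 2) * (s / 2 / (n + 2)) := by omega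
  refine ⟨2 * ((n + 1) + (n + 2) * (s / 2 / (n + 2))) + 1, by omega, ⟨by omega, ?_⟩, ?_⟩
  · rw [e, Nat.add_mul_mod_self_left, Nat.mod_eq_of_lt (by omega)]
  · rw [blockIndex_mod_two] at hs
    unfold blockIndex
    rw [e, Nat.add_mul_mod_self_left, Nat.add_mul_div_left _ _ (by omega),
      Nat.mod_eq_of_lt (show n + 1 < n + 2 by omega),
      Nat.div_eq_of_lt (show n + 1 < n + 2 by omega)]
    split_ifs at hs ⊢ <;> omega

theorem avoidingWord_blockStart_add {n b o : ℕ} (ho : o < 2 * ((n + 2) / 2)) :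
    avoidingWord n (blockStart n b + o) =
      2 * ((b % 2 * ((n + 2) / 2) + (if o % 2 = 0 then letterIndex n b else 0) + o / 2) % (n + 2))
        + o % 2 := by
  have hb := blockIndex_blockStart_add (b := b) ho
  have hodd : blockStart n b % 2 = 0 := by unfold blockStart; omega
  unfold avoidingWord
  congr 1
  · congr 1
    rcases Nat.mod_two_eq_zero_or_one o with h | h
    · have e : blockStart n b + o =
          2 * ((b % 2 * ((n + 2) / 2) + o / 2) + (n + 2) * (b / 2)) := by
        unfold blockStart; omega
      rw [if_pos h]
      rw [e] at hb ⊢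
      rw [letterIndex_even, hb, add_right_comm _ (letterIndex n b),
        add_right_comm _ ((n + 2) * (b / 2)), Nat.add_mul_mod_self_left]
    · have e : blockStart n b + o =
          2 * ((b % 2 * ((n + 2) / 2) + o / 2) + (n + 2) * (b / 2)) + 1 := by
        unfold blockStart; omega
      rw [if_neg (by omega), e, letterIndex_odd, Nat.add_mul_mod_self_left, add_zero]
  · omega

/-- In every block one can choose a position whose letter lies outside a given set of at most `n`
letters, the choice depending only on the letter that generates the block. -/
theorem exists_offset {n : ℕ} (bad : Finset ℕ) (hbad : bad.card ≤ n) :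
    ∃ off : ℕ → ℕ, ∀ b, off (avoidingWord n b) < 2 * ((n + 2) / 2) ∧
      avoidingWord n (blockStart n b + off (avoidingWord n b)) ∉ bad := by
  have hex : ∀ b, ∃ o, o < 2 * ((n + 2) / 2) ∧ avoidingWord n (blockStart n b + o) ∉ bad := by
    intro b
    by_contra! hcon
    have hinj : Set.InjOn (fun o => avoidingWord n (blockStart n b + o))
        (Finset.range (2 * ((n + 2) / 2))) := by
      intro o ho o' ho' h
      simp only [Finset.coe_range, Set.mem_Iio] at ho ho'
      simp only [avoidingWord_blockStart_add ho, avoidingWord_blockStart_add ho'] at h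
      have hpar : o % 2 = o' % 2 := by omega
      rw [hpar] at h
      have h1 := Nat.ModEq.add_left_cancel' _
        (Nat.eq_of_mul_eq_mul_left (by norm_num) (Nat.add_right_cancel h) :
          _ ≡ _ [MOD n + 2])
      have h2 := h1.eq_of_lt_of_lt (by omega) (by omega)
      omega
    have := Finset.card_le_card_of_injOn _
      (fun o ho => hcon o (Finset.mem_range.1 ho)) hinj
    rw [Finset.card_range] at this
    omega
  choose o ho using hex
  refine ⟨fun a => o (Classical.epsilon fun b => avoidingWord n b = a), fun b => ?_⟩
  have hb := Classical.epsilon_spec (p := fun b' => avoidingWord n b' = avoidingWord n b) ⟨b, rfl⟩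
  set b' := Classical.epsilon fun b' => avoidingWord n b' = avoidingWord n b
  obtain ⟨h1, h2⟩ := ho b'
  obtain ⟨e1, e2⟩ := avoidingWord_inj hb
  refine ⟨h1, ?_⟩
  rwa [avoidingWord_blockStart_add h1, ← e1, ← e2, ← avoidingWord_blockStart_add h1]

/-- The marked position of block `b`, at an offset depending on the letter generating `b`. -/
def markerPos (n : ℕ) (off : ℕ → ℕ) (b : ℕ) : ℕ := blockStart n b + off (avoidingWord n b)

/-- The letter generating the block of `j`, if `j` is the marked position of its block. -/
def decode (n : ℕ) (off : ℕ → ℕ) (j : ℕ) : Option ℕ :=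
  if markerPos n off (blockIndex n j) = j then some (avoidingWord n (blockIndex n j)) else none

/-- The gap before position `s` lies in a block of odd index, after the marked position. -/
def AfterOddMarker (n : ℕ) (off : ℕ → ℕ) (s : ℕ) : Prop :=
  blockIndex n s % 2 = 1 ∧ markerPos n off (blockIndex n s) < s

theorem decode_eq_none {n : ℕ} {off : ℕ → ℕ} {j : ℕ} :
    decode n off j = none ↔ markerPos n off (blockIndex n j) ≠ j := by
  simp [decode]

theorem decode_congr {n : ℕ} {off : ℕ → ℕ} {j j' : ℕ} (h : j ≡ j' [MOD 2 * (n + 2)])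
    (h' : avoidingWord n (blockIndex n j) = avoidingWord n (blockIndex n j')) :
    decode n off j = decode n off j' := by
  have h1 := sub_blockStart_of_modEq h
  have h2 := blockStart_blockIndex_le n j
  have h3 := blockStart_blockIndex_le n j'
  unfold decode markerPos
  rw [h']
  congr 1
  apply propext
  omega

/-- All offsets stay within the shortest block length. -/
def IsOffset (n : ℕ) (off : ℕ → ℕ) : Prop :=
  ∀ b, off (avoidingWord n b) < 2 * ((n + 2) / 2)

theorem IsOffset.blockIndex_markerPos {n : ℕ} {off : ℕ → ℕ} (hoff : IsOffset n off) (b : ℕ) :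
    blockIndex n (markerPos n off b) = b :=
  blockIndex_blockStart_add (hoff b)

theorem IsOffset.decode_markerPos_ne_none {n : ℕ} {off : ℕ → ℕ} (hoff : IsOffset n off) (b : ℕ) :
    decode n off (markerPos n off b) ≠ none := by
  rw [Ne, decode_eq_none, hoff.blockIndex_markerPos]
  simp

theorem blockIndex_eq_of_le_of_le {n i j : ℕ} (h : blockStart n (blockIndex n j) ≤ i)
    (hij : i ≤ j) : blockIndex n i = blockIndex n j := by
  apply le_antisymm (blockIndex_mono n hij)
  have h1 := blockIndex_mono n h
  have h2 := blockIndex_blockStart_add (n := n) (b := blockIndex n j) (o := 0) (by omega)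
  rw [add_zero] at h2
  omega

theorem IsOffset.afterOddMarker_iff_next {n : ℕ} {off : ℕ → ℕ} (hoff : IsOffset n off) {s : ℕ} :
    AfterOddMarker n off s ↔
      ∃ j, s ≤ j ∧ IsOddEnd n j ∧ ∀ i, s ≤ i → i ≤ j → decode n off i = none := by
  constructor
  · rintro ⟨h1, h2⟩
    obtain ⟨j, hsj, hj, hb⟩ := exists_isOddEnd h1
    refine ⟨j, hsj, hj, fun i hsi hij => decode_eq_none.2 ?_⟩
    have hi : blockIndex n i = blockIndex n s :=
      le_antisymm ((blockIndex_mono n hij).trans hb.le) (blockIndex_mono n hsi)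
    rw [hi]
    omega
  · rintro ⟨j, hsj, hj, hnone⟩
    have h1 : blockStart n (blockIndex n j) ≤ markerPos n off (blockIndex n j) :=
      Nat.le_add_right _ _
    have h2 : markerPos n off (blockIndex n j) ≤ j := by
      have := hj.le
      have := hoff (blockIndex n j)
      unfold markerPos
      omega
    have h3 : markerPos n off (blockIndex n j) < s := by
      by_contra hcon
      exact hoff.decode_markerPos_ne_none _ (hnone _ (not_lt.1 hcon) h2)
    have h4 : blockIndex n s = blockIndex n j := blockIndex_eq_of_le_of_le (by omega) hsj
    rw [AfterOddMarker, h4]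
    exact ⟨hj.blockIndex_odd, h3⟩

theorem blockIndex_eq_of_no_isOddEnd {n j e : ℕ} (hje : j ≤ e) (hj : blockIndex n j % 2 = 1)
    (h : ∀ i, j ≤ i → i < e → ¬ IsOddEnd n i) : blockIndex n e = blockIndex n j := by
  obtain ⟨k, hjk, hk, hb⟩ := exists_isOddEnd hj
  have hek : e ≤ k := by
    by_contra hcon
    exact h k hjk (not_le.1 hcon) hk
  exact le_antisymm ((blockIndex_mono n hek).trans hb.le) (blockIndex_mono n hje)

theorem IsOffset.afterOddMarker_iff_prev {n : ℕ} {off : ℕ → ℕ} (hoff : IsOffset n off) {e : ℕ} :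
    AfterOddMarker n off e ↔
      ∃ j, j < e ∧ decode n off j ≠ none ∧ blockIndex n j % 2 = 1 ∧
        ∀ i, j ≤ i → i < e → ¬ IsOddEnd n i := by
  constructor
  · rintro ⟨h1, h2⟩
    have hb := hoff.blockIndex_markerPos (blockIndex n e)
    refine ⟨_, h2, hoff.decode_markerPos_ne_none _, by rw [hb, h1], fun i hi hie hend => ?_⟩
    have h3 := hend.blockIndex_succ_eq
    have h4 := blockIndex_mono n hi
    have h5 := blockIndex_mono n (Nat.succ_le_of_lt hie)
    simp only [Nat.succ_eq_add_one] at h5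
    omega
  · rintro ⟨j, hje, hj, hodd, hend⟩
    have hb := blockIndex_eq_of_no_isOddEnd hje.le hodd hend
    have hm : markerPos n off (blockIndex n j) = j := by
      by_contra hcon
      exact hj (decode_eq_none.2 hcon)
    rw [AfterOddMarker, hb, hm]
    exact ⟨hodd, hje⟩

/-- `AfterOddMarker` does not change along a stretch without marked positions and odd ends. -/
theorem IsOffset.afterOddMarker_add_iff {n : ℕ} {off : ℕ → ℕ} (hoff : IsOffset n off) {s d : ℕ}
    (h : ∀ i < d, decode n off (s + i) = none ∧ ¬ IsOddEnd n (s + i)) :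
    AfterOddMarker n off s ↔ AfterOddMarker n off (s + d) := by
  have hlt : ∀ i, s ≤ i → i < s + d → decode n off i = none ∧ ¬ IsOddEnd n i := by
    intro i h1 h2
    have := h (i - s) (by omega)
    rwa [Nat.add_sub_cancel' h1] at this
  rw [hoff.afterOddMarker_iff_next, hoff.afterOddMarker_iff_next]
  constructor
  · rintro ⟨j, hsj, hj, hnone⟩
    refine ⟨j, ?_, hj, fun i hi hij => hnone i (by omega) hij⟩
    by_contra hcon
    exact (hlt j hsj (not_le.1 hcon)).2 hj
  · rintro ⟨j, hsj, hj, hnone⟩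
    refine ⟨j, by omega, hj, fun i hi hij => ?_⟩
    rcases lt_or_ge i (s + d) with h1 | h1
    · exact (hlt i hi h1).1
    · exact hnone i h1 hij

/-- Two stretches that look the same and contain a marked position or an odd end have the same
`AfterOddMarker` status at their left end. -/
theorem IsOffset.afterOddMarker_left {n : ℕ} {off : ℕ → ℕ} (hoff : IsOffset n off) {s s' d : ℕ}
    (hdec : ∀ i < d, decode n off (s + i) = decode n off (s' + i))
    (hend : ∀ i < d, IsOddEnd n (s + i) ↔ IsOddEnd n (s' + i))
    (hex : ∃ i < d, decode n off (s + i) ≠ none ∨ IsOddEnd n (s + i))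
    (h : AfterOddMarker n off s) : AfterOddMarker n off s' := by
  obtain ⟨j, hsj, hj, hnone⟩ := hoff.afterOddMarker_iff_next.1 h
  have key : ∃ i < d, IsOddEnd n (s + i) ∧ s + i ≤ j := by
    rcases lt_or_ge j (s + d) with h1 | h1
    · exact ⟨j - s, by omega, by rwa [Nat.add_sub_cancel' hsj], by omega⟩
    · obtain ⟨i, hi, hi' | hi'⟩ := hex
      · exact absurd (hnone _ (by omega) (by omega)) hi'
      · exact ⟨i, hi, hi', by omega⟩
  obtain ⟨i, hi, hi', hij⟩ := key
  refine hoff.afterOddMarker_iff_next.2 ⟨s' + i, by omega, (hend i hi).1 hi', fun k h1 h2 => ?_⟩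
  have := hdec (k - s') (by omega)
  rw [Nat.add_sub_cancel' h1] at this
  rw [← this]
  exact hnone _ (by omega) (by omega)

/-- Two stretches that look the same and contain a marked position or an odd end have the same
`AfterOddMarker` status at their right end. -/
theorem IsOffset.afterOddMarker_right {n : ℕ} {off : ℕ → ℕ} (hoff : IsOffset n off) {s s' d : ℕ}
    (hmod : s ≡ s' [MOD 2 * (n + 2)])
    (hdec : ∀ i < d, decode n off (s + i) = decode n off (s' + i))
    (hend : ∀ i < d, IsOddEnd n (s + i) ↔ IsOddEnd n (s' + i))
    (hex : ∃ i < d, decode n off (s + i) ≠ none ∨ IsOddEnd n (s + i))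
    (h : AfterOddMarker n off (s + d)) : AfterOddMarker n off (s' + d) := by
  obtain ⟨j, hje, hj, hodd, hno⟩ := hoff.afterOddMarker_iff_prev.1 h
  have hsj : s ≤ j := by
    by_contra hcon
    obtain ⟨i, hi, hi' | hi'⟩ := hex
    · have hb : blockIndex n (s + i) = blockIndex n j :=
        blockIndex_eq_of_no_isOddEnd (by omega) hodd fun k h1 h2 => hno k h1 (by omega)
      have e1 : markerPos n off (blockIndex n j) = j := by
        by_contra h'
        exact hj (decode_eq_none.2 h')
      have e2 : markerPos n off (blockIndex n (s + i)) = s + i := by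
        by_contra h'
        exact hi' (decode_eq_none.2 h')
      rw [hb] at e2
      omega
    · exact hno _ (by omega) (by omega) hi'
  obtain ⟨i, rfl⟩ := Nat.exists_eq_add_of_le hsj
  refine hoff.afterOddMarker_iff_prev.2 ⟨s' + i, by omega, ?_, ?_, fun k h1 h2 hk => ?_⟩
  · rwa [← hdec i (by omega)]
  · rwa [← blockIndex_mod_two_of_modEq (hmod.add_right i)]
  · have := hend (k - s') (by omega)
    rw [Nat.add_sub_cancel' (by omega)] at this
    exact hno _ (by omega) (by omega) (this.2 hk)

theorem IsOffset.not_afterOddMarker_right {n : ℕ} {off : ℕ → ℕ} (hoff : IsOffset n off) {s d : ℕ}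
    (hdec : ∀ i < d, decode n off (s + i) = none) (hex : ∃ i < d, IsOddEnd n (s + i)) :
    ¬ AfterOddMarker n off (s + d) := by
  intro h
  obtain ⟨j, hje, hj, -, hno⟩ := hoff.afterOddMarker_iff_prev.1 h
  obtain ⟨i, hi, hi'⟩ := hex
  rcases lt_or_ge j s with h1 | h1
  · exact hno _ (by omega) (by omega) hi'
  · have := hdec (j - s) (by omega)
    rw [Nat.add_sub_cancel' h1] at this
    exact hj this

theorem IsOffset.filterMap_range {n : ℕ} {off : ℕ → ℕ} (hoff : IsOffset n off) (s : ℕ) :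
    (List.range s).filterMap (fun j =>
        if markerPos n off (blockIndex n j) = j then some (blockIndex n j) else none) =
      List.range (blockIndex n s + if markerPos n off (blockIndex n s) < s then 1 else 0) := by
  induction s with
  | zero => simp [blockIndex]
  | succ s ih =>
    rw [List.range_succ, List.filterMap_append, ih]
    have hs := hoff.blockIndex_markerPos (blockIndex n s)
    rcases blockIndex_succ n s with h | ⟨h, h'⟩
    · rw [h]
      rcases lt_trichotomy (markerPos n off (blockIndex n s)) s with hlt | heq | hgt
      · simp [hlt, hlt.ne, Nat.lt_succ_of_lt hlt]
      · simp [heq, List.range_succ]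
      · simp [hgt.ne', not_lt.2 hgt.le, not_le.2 hgt]
    · have h1 : s + 1 ≤ markerPos n off (blockIndex n (s + 1)) := by
        unfold markerPos; omega
      have h2 : markerPos n off (blockIndex n s) ≤ s := by
        by_contra hcon
        have := blockIndex_mono n (Nat.succ_le_of_lt (not_le.1 hcon))
        simp only [Nat.succ_eq_add_one] at this
        omega
      rw [if_neg (not_lt.2 h1), h]
      rcases h2.lt_or_eq with hlt | heq
      · simp [hlt, hlt.ne]
      · simp [heq, List.range_succ]

/-- Decoding a factor of the avoiding word gives a factor of the avoiding word. -/
theorem IsOffset.exists_occursAt_filterMap_decode {n : ℕ} {off : ℕ → ℕ} (hoff : IsOffset n off)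
    (s d : ℕ) : ∃ c, OccursAt (avoidingWord n) ((List.range' s d).filterMap (decode n off)) c := by
  set T : ℕ → Option ℕ := fun j =>
    if markerPos n off (blockIndex n j) = j then some (blockIndex n j) else none with hT
  have hdec : decode n off = fun j => (T j).map (avoidingWord n) := by
    funext j
    simp only [decode, hT]
    split_ifs <;> rfl
  have happ : List.range (s + d) = List.range s ++ List.range' s d := by
    have := @List.range'_append 0 s d 1
    rw [one_mul, zero_add] at this
    rw [List.range_eq_range', List.range_eq_range', this]
  have h1 := hoff.filterMap_range s
  have h2 := hoff.filterMap_range (s + d)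
  rw [happ, List.filterMap_append, h1] at h2
  set N₁ := blockIndex n s + if markerPos n off (blockIndex n s) < s then 1 else 0
  set Y := (List.range' s d).filterMap T with hY
  have hlen := congrArg List.length h2
  simp only [List.length_append, List.length_range] at hlen
  rw [← hlen] at h2
  have hY' : Y = List.range' N₁ Y.length := by
    have := @List.range'_append 0 N₁ Y.length 1
    rw [one_mul, zero_add] at this
    rw [List.range_eq_range', List.range_eq_range', ← this] at h2
    exact List.append_cancel_left h2
  refine ⟨N₁, ?_⟩
  have e : (List.range' s d).filterMap (decode n off) = Y.map (avoidingWord n) := by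
    rw [hdec, hY, List.map_filterMap]
  rw [e, OccursAt, List.length_map, ← hY']

theorem div_two_mod_lt_of_no_isOddEnd {n s d : ℕ} (hlt : s / 2 < (s + d) / 2)
    (h : ∀ i < d, ¬ IsOddEnd n (s + i)) : s / 2 % (n + 2) < (s + d) / 2 % (n + 2) := by
  have h1 := Nat.div_add_mod (s / 2) (n + 2)
  have h2 := Nat.div_add_mod ((s + d) / 2) (n + 2)
  have h3 := Nat.mod_lt (s / 2) (show 0 < n + 2 by omega)
  have hle : s / 2 / (n + 2) ≤ (s + d) / 2 / (n + 2) := Nat.div_le_div_right hlt.le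
  rcases hle.lt_or_eq with hq | hq
  · exfalso
    have h4 := Nat.mul_le_mul_left (n + 2) (Nat.succ_le_of_lt hq)
    rw [Nat.succ_eq_add_one, mul_add] at h4
    set t := (n + 1) + (n + 2) * (s / 2 / (n + 2)) with ht
    refine h (2 * t + 1 - s) (by omega) ?_
    rw [Nat.add_sub_cancel' (by omega)]
    refine ⟨by omega, ?_⟩
    rw [show (2 * t + 1) / 2 = t by omega, ht, Nat.add_mul_mod_self_left,
      Nat.mod_eq_of_lt (by omega)]
  · rw [hq] at h1
    omega

theorem IsTiling.flatMap_filterMap {ω : ℕ → ℕ} {h h' : ℕ → List ℕ} {f : ℕ → Option ℕ}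
    {p : List ℕ} {s : ℕ} (hp : IsTiling ω h p s)
    (hh : ∀ x ∈ p, ∀ t, OccursAt ω (h x) t → h' x = (List.range' t (h x).length).filterMap f) :
    p.flatMap h' = (List.range' s (p.flatMap h).length).filterMap f := by
  induction p generalizing s with
  | nil => simp
  | cons x p ih =>
    have hr := @List.range'_append s (h x).length (p.flatMap h).length 1
    rw [one_mul] at hr
    rw [List.flatMap_cons, List.flatMap_cons, List.length_append, ← hr, List.filterMap_append,
      ← hh x List.mem_cons_self s hp.1,
      ih hp.2 fun y hy => hh y (List.mem_cons_of_mem _ hy)]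

theorem flatMap_filter_ne_nil (p : List ℕ) (h : ℕ → List ℕ) :
    (p.filter fun x => decide (h x ≠ [])).flatMap h = p.flatMap h := by
  induction p with
  | nil => rfl
  | cons x p ih =>
    by_cases hx : h x = []
    · rw [List.filter_cons_of_neg (by simp [hx]), ih, List.flatMap_cons, hx, List.nil_append]
    · rw [List.filter_cons_of_pos (by simp [hx]), List.flatMap_cons, ih, List.flatMap_cons]

theorem OccursAt.letter_eq {ω : ℕ → ℕ} {w : List ℕ} {t t' i : ℕ} (ht : OccursAt ω w t)
    (ht' : OccursAt ω w t') (hi : i < w.length) : ω (t + i) = ω (t' + i) := by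
  rw [← ht.getElem hi, ← ht'.getElem hi]

theorem OccursAt.headD {ω : ℕ → ℕ} {w : List ℕ} {t : ℕ} (ht : OccursAt ω w t) (hw : w ≠ []) :
    w.headD 0 = ω t := by
  obtain ⟨a, v, rfl⟩ := List.exists_cons_of_ne_nil hw
  exact ht.getElem (i := 0) (by simp)

theorem OccursAt.last_mem_iff {n : ℕ} {w : List ℕ} {t : ℕ} (ht : OccursAt (avoidingWord n) w t) :
    2 * n + 3 ∈ w ↔ ∃ i < w.length, IsOddEnd n (t + i) := by
  rw [List.mem_iff_getElem]
  constructor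
  · rintro ⟨i, hi, h⟩
    rw [ht.getElem hi] at h
    exact ⟨i, hi, avoidingWord_eq_last_iff.1 h⟩
  · rintro ⟨i, hi, h⟩
    exact ⟨i, hi, by rw [ht.getElem hi]; exact avoidingWord_eq_last_iff.2 h⟩

/-- Away from words consisting of one letter of even class, occurrences of a word in the avoiding
word are congruent. -/
theorem OccursAt.modEq {n : ℕ} {w : List ℕ} {t t' : ℕ} (ht : OccursAt (avoidingWord n) w t)
    (ht' : OccursAt (avoidingWord n) w t') (hne : w ≠ [])
    (hw : 2 ≤ w.length ∨ w.headD 0 % 2 = 1) : t ≡ t' [MOD 2 * (n + 2)] := by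
  have h0 := ht.letter_eq ht' (List.length_pos_of_ne_nil hne)
  rcases hw with hw | hw
  · exact (synchronization h0 (ht.letter_eq ht' (i := 1) (by omega))).1
  · rw [ht.headD hne, avoidingWord_mod_two] at hw
    exact modEq_of_avoidingWord_eq_of_odd h0 hw

/-- Every pattern in at most `n` letters encountered by the avoiding word is encountered by a Zimin
word. -/
theorem ziminEncounters_of_occursAt {n : ℕ} {p : List ℕ} {h : ℕ → List ℕ} {s : ℕ}
    (hne : ∀ x ∈ p, h x ≠ []) (hcard : p.toFinset.card ≤ n)
    (hp : OccursAt (avoidingWord n) (p.flatMap h) s) : ZiminEncounters p := by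
  classical
  induction hD : (p.flatMap h).length using Nat.strong_induction_on generalizing p h s with
  | _ D ih =>
  rcases eq_or_ne p [] with rfl | hpne
  · exact ⟨0, h, hne, by simp [zimin]⟩
  obtain ⟨off, hoff'⟩ := exists_offset (n := n) (p.toFinset.image fun x => (h x).headD 0)
    (Finset.card_image_le.trans hcard)
  have hoff : IsOffset n off := fun b => (hoff' b).1
  have ht : IsTiling (avoidingWord n) h p s := hp.isTiling
  have hstart : ∀ x ∈ p, ∀ t, OccursAt (avoidingWord n) (h x) t → decode n off t = none := by
    intro x hx t hxt
    rw [decode_eq_none]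
    intro hm
    refine (hoff' (blockIndex n t)).2 ?_
    change avoidingWord n (markerPos n off (blockIndex n t)) ∈ _
    rw [hm, ← hxt.headD (hne x hx)]
    exact Finset.mem_image_of_mem (fun x => (h x).headD 0) (List.mem_toFinset.2 hx)
  have hdec : ∀ x ∈ p, ∀ t t', OccursAt (avoidingWord n) (h x) t →
      OccursAt (avoidingWord n) (h x) t' → ∀ i < (h x).length,
      decode n off (t + i) = decode n off (t' + i) := by
    intro x hx t t' hxt hxt' i hi
    cases i with
    | zero => rw [add_zero, add_zero, hstart x hx t hxt, hstart x hx t' hxt']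
    | succ i =>
      obtain ⟨h1, h2⟩ := synchronization (hxt.letter_eq hxt' (i := i) (by omega))
        (hxt.letter_eq hxt' hi)
      exact decode_congr (h1.add_right 1) h2
  set h' : ℕ → List ℕ := fun x =>
    (List.range' (Classical.epsilon (OccursAt (avoidingWord n) (h x))) (h x).length).filterMap
      (decode n off) with hh'
  have hh : ∀ x ∈ p, ∀ t, OccursAt (avoidingWord n) (h x) t →
      h' x = (List.range' t (h x).length).filterMap (decode n off) := by
    intro x hx t hxt
    have hε := Classical.epsilon_spec (ht.exists_occursAt hx)
    simp only [hh', List.range'_eq_map_range, List.filterMap_map]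
    apply List.filterMap_congr
    intro i hi
    exact hdec x hx _ _ hε hxt i (List.mem_range.1 hi)
  have hnil : ∀ x ∈ p, ∀ t, OccursAt (avoidingWord n) (h x) t →
      (h' x = [] ↔ ∀ i < (h x).length, decode n off (t + i) = none) := by
    intro x hx t hxt
    rw [hh x hx t hxt, List.range'_eq_map_range, List.filterMap_map, List.filterMap_eq_nil_iff]
    simp
  set K₁ : ℕ → Bool := fun x => decide (2 ≤ (h x).length ∨ (h x).headD 0 % 2 = 1) with hK₁
  set K₂ : ℕ → Bool := fun x => decide (h' x ≠ [] ∨ 2 * n + 3 ∈ h x) with hK₂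
  set K₃ : ℕ → Bool := fun x => decide (h' x ≠ []) with hK₃
  have hpos : ∀ x ∈ p, 0 < (h x).length := fun x hx => List.length_pos_of_ne_nil (hne x hx)
  have hK₁f : ∀ x ∈ p, K₁ x = false → ∀ t, OccursAt (avoidingWord n) (h x) t →
      (h x).length = 1 ∧ t % 2 = 0 := by
    intro x hx hKx t hxt
    have h1 : ¬ (2 ≤ (h x).length ∨ (h x).headD 0 % 2 = 1) := of_decide_eq_false hKx
    rw [hxt.headD (hne x hx), avoidingWord_mod_two] at h1
    have := hpos x hx
    omega
  have hK₂f : ∀ x ∈ p, K₂ x = false → ∀ t, OccursAt (avoidingWord n) (h x) t →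
      ∀ i < (h x).length, decode n off (t + i) = none ∧ ¬ IsOddEnd n (t + i) := by
    intro x hx hKx t hxt i hi
    have h1 : ¬ (h' x ≠ [] ∨ 2 * n + 3 ∈ h x) := of_decide_eq_false hKx
    rw [hxt.last_mem_iff] at h1
    push Not at h1
    exact ⟨(hnil x hx t hxt).1 h1.1 i hi, h1.2 i hi⟩
  have hK₁₂ : ∀ x ∈ p, K₂ x = true → K₁ x = true := by
    intro x hx hKx
    by_contra hcon
    obtain ⟨t, hxt⟩ := ht.exists_occursAt hx
    obtain ⟨hl, ht2⟩ := hK₁f x hx (by simpa using hcon) t hxt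
    have h1 : h' x ≠ [] ∨ 2 * n + 3 ∈ h x := of_decide_eq_true hKx
    rw [Ne, hnil x hx t hxt, hxt.last_mem_iff, hl] at h1
    simp only [Nat.lt_one_iff, forall_eq, exists_eq_left, add_zero] at h1
    rcases h1 with h1 | h1
    · exact h1 (hstart x hx t hxt)
    · have := h1.1
      omega
  have hmod : ∀ x ∈ p, K₁ x = true → ∀ t t', OccursAt (avoidingWord n) (h x) t →
      OccursAt (avoidingWord n) (h x) t' → t ≡ t' [MOD 2 * (n + 2)] :=
    fun x hx hKx t t' hxt hxt' => hxt.modEq hxt' (hne x hx) (of_decide_eq_true hKx)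
  have hfinal : ZiminEncounters (p.filter K₃) := by
    have hflat : (p.filter K₃).flatMap h' = (List.range' s D).filterMap (decode n off) := by
      rw [hK₃, flatMap_filter_ne_nil, ht.flatMap_filterMap hh, hD]
    obtain ⟨c, hc⟩ := hoff.exists_occursAt_filterMap_decode s D
    rw [← hflat] at hc
    refine ih _ ?_ (fun x hx => ?_) ?_ hc rfl
    · obtain ⟨x, q, rfl⟩ := List.exists_cons_of_ne_nil hpne
      have hx := hpos x List.mem_cons_self
      have hDpos : D ≠ 0 := by
        rw [← hD, List.flatMap_cons, List.length_append]
        omega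
      obtain ⟨d, rfl⟩ := Nat.exists_eq_succ_of_ne_zero hDpos
      rw [hflat, Nat.succ_eq_add_one, List.range'_succ,
        List.filterMap_cons_none (hstart x List.mem_cons_self s ht.1)]
      refine (List.length_filterMap_le _ _).trans_lt ?_
      simp
    · exact of_decide_eq_true (List.mem_filter.1 hx).2
    · refine (Finset.card_le_card fun x hx => ?_).trans hcard
      exact List.mem_toFinset.2 (List.mem_filter.1 (List.mem_toFinset.1 hx)).1
  have hzone : ZiminEncounters (p.filter K₂) := by
    refine ht.ziminEncounters_filter (fun t => if AfterOddMarker n off t then 0 else 1) 1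
      (fun t => by split_ifs <;> omega) K₂ K₃ ?_ ?_ ?_ ?_
    · intro x hx hKx t hxt
      simp only [hoff.afterOddMarker_add_iff (hK₂f x hx hKx t hxt)]
    · intro x hx hKx
      have key : ∀ t t', OccursAt (avoidingWord n) (h x) t → OccursAt (avoidingWord n) (h x) t' →
          (AfterOddMarker n off t → AfterOddMarker n off t') ∧
          (AfterOddMarker n off (t + (h x).length) →
            AfterOddMarker n off (t' + (h x).length)) := by
        intro t t' hxt hxt'
        have hend : ∀ i < (h x).length, IsOddEnd n (t + i) ↔ IsOddEnd n (t' + i) := by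
          intro i hi
          have := hxt.letter_eq hxt' hi
          rw [IsOddEnd, IsOddEnd, ← avoidingWord_eq_last_iff, ← avoidingWord_eq_last_iff, this]
        have hex : ∃ i < (h x).length, decode n off (t + i) ≠ none ∨ IsOddEnd n (t + i) := by
          have h1 : h' x ≠ [] ∨ 2 * n + 3 ∈ h x := of_decide_eq_true hKx
          rw [Ne, hnil x hx t hxt, hxt.last_mem_iff] at h1
          push Not at h1
          rcases h1 with ⟨i, hi, h1⟩ | ⟨i, hi, h1⟩
          · exact ⟨i, hi, Or.inl h1⟩
          · exact ⟨i, hi, Or.inr h1⟩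
        exact ⟨hoff.afterOddMarker_left (hdec x hx t t' hxt hxt') hend hex,
          hoff.afterOddMarker_right (hmod x hx (hK₁₂ x hx hKx) t t' hxt hxt')
            (hdec x hx t t' hxt hxt') hend hex⟩
      intro t t' hxt hxt'
      obtain ⟨h1, h2⟩ := key t t' hxt hxt'
      obtain ⟨h3, h4⟩ := key t' t hxt' hxt
      simp only [Iff.intro h1 h3, Iff.intro h2 h4, and_self]
    · intro x hx hKx hKx' t hxt
      have h1 : h' x = [] := not_not.1 (of_decide_eq_false hKx')
      have h2 : h' x ≠ [] ∨ 2 * n + 3 ∈ h x := of_decide_eq_true hKx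
      have h3 := (hnil x hx t hxt).1 h1
      have h4 := hxt.last_mem_iff.1 (h2.resolve_left (not_not.2 h1))
      have h5 : AfterOddMarker n off t := by
        obtain ⟨i, hi, hi'⟩ := h4
        refine hoff.afterOddMarker_iff_next.2 ⟨t + i, by omega, hi', fun k hk hk' => ?_⟩
        have := h3 (k - t) (by omega)
        rwa [Nat.add_sub_cancel' hk] at this
      rw [if_pos h5, if_neg (hoff.not_afterOddMarker_right h3 h4)]
      exact one_pos
    · convert hfinal using 1
      rw [List.filter_filter]
      congr 1
      funext x
      by_cases h1 : h' x = [] <;> simp [hK₂, hK₃, h1]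
  have hcell : ZiminEncounters (p.filter K₁) := by
    refine ht.ziminEncounters_filter (fun t => t / 2 % (n + 2)) (n + 1)
      (fun t => Nat.le_of_lt_succ (Nat.mod_lt _ (by omega))) K₁ K₂ ?_ ?_ ?_ ?_
    · intro x hx hKx t hxt
      obtain ⟨h1, h2⟩ := hK₁f x hx hKx t hxt
      simp only [h1, show (t + 1) / 2 = t / 2 by omega]
    · intro x hx hKx t t' hxt hxt'
      have h1 := hmod x hx hKx t t' hxt hxt'
      exact ⟨(modEq_two_mul_iff.1 h1).2, (modEq_two_mul_iff.1 (h1.add_right _)).2⟩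
    · intro x hx hKx hKx' t hxt
      refine div_two_mod_lt_of_no_isOddEnd ?_ fun i hi => (hK₂f x hx hKx' t hxt i hi).2
      have h1 : 2 ≤ (h x).length ∨ (h x).headD 0 % 2 = 1 := of_decide_eq_true hKx
      rw [hxt.headD (hne x hx), avoidingWord_mod_two] at h1
      have := hpos x hx
      omega
    · convert hzone using 1
      rw [List.filter_filter]
      apply List.filter_congr
      intro x hx
      have := hK₁₂ x hx
      cases h2 : K₂ x <;> simp_all
  have := ht.ziminEncounters_filter (fun t => t % 2) 1
    (fun t => by omega) (fun _ => true) K₁ (by simp) ?_ ?_ (by simpa using hcell)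
  · simpa using this
  · intro x hx _ t t' hxt hxt'
    have h1 := (avoidingWord_inj (hxt.letter_eq hxt' (hpos x hx))).1
    simp only [add_zero] at h1
    exact ⟨h1, by rw [Nat.add_mod, h1, ← Nat.add_mod]⟩
  · intro x hx _ hKx t hxt
    obtain ⟨h1, h2⟩ := hK₁f x hx hKx t hxt
    simp only [h1]
    omega

/-- For every `n ≥ 1` there are infinitely many words over an alphabet with
`2(n+2)` letters each of which avoids every non-blocking pattern with at most
`n` distinct letters. -/
theorem simultaneous_avoidance (n : ℕ) (hn : 1 ≤ n) :
    {w : List (Fin (2 * (n + 2))) |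
      ∀ u : List ℕ, u ≠ [] → ¬ Blocking u → u.toFinset.card ≤ n → Avoids u w}.Infinite := by
  set f : ℕ → Fin (2 * (n + 2)) := fun j => ⟨avoidingWord n j, avoidingWord_lt n j⟩ with hf
  refine Set.infinite_of_injective_forall_mem (f := fun m => (List.range m).map f) ?_ ?_
  · intro m m' hm
    simpa using congrArg List.length hm
  · rintro m u - hu hcard ⟨h, hne, a, b, hab⟩
    apply hu
    have hocc : OccursAt (avoidingWord n) ((a ++ u.flatMap h ++ b).map Fin.val) 0 := by
      rw [hab, OccursAt]
      simp [List.range_eq_range', hf]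
    rw [List.map_append, List.map_append] at hocc
    have hocc' := hocc.append.1.append.2
    rw [List.map_flatMap] at hocc'
    obtain ⟨N, hN⟩ := ziminEncounters_of_occursAt (h := fun x => (h x).map Fin.val)
      (fun x hx => by simpa using hne x hx) hcard hocc'
    exact blocking_of_encounters_zimin hN
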